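/- Let n ≥ 3, let k ≥ 2, and let m₁, …, m_k ≥ 1 satisfy m₁ + ⋯ + m_k = n − 1. Let X = P_{m₁} × P_{m₂} × ⋯ × P_{m_k} × Δ^k ⊆ ℝ^{m₁} × ⋯ × ℝ^{m_k} × ℝ^{k+1}, let ∂X denote the intrinsic frontier of X (the frontier of X taken within its affine span), and let B = P_{m₁} × ⋯ × P_{m_k} × (⋃_{i=2}^{k} F_i). Then the closure of ∂X \ B (equivalently, ∂X minus the relative interior of B within ∂X) is a strong deformation retract of X. -/

import Mathlib

open scoped BigOperators

/-- The vertex of the permutahedron associated to a permutation `σ` of `[n]`. -/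
noncomputable def permVec (n : ℕ) (σ : Equiv.Perm (Fin n)) : EuclideanSpace ℝ (Fin n) :=
  WithLp.toLp 2 fun i => ((σ.symm i : ℕ) + 1 : ℝ)

/-- The permutahedron `P_n ⊆ ℝⁿ`. -/
noncomputable def permutahedron (n : ℕ) : Set (EuclideanSpace ℝ (Fin n)) :=
  convexHull ℝ (Set.range (permVec n))

/-- The standard `k`-simplex `Δ^k ⊆ ℝ^{k+1}`. -/
def simplexSet (k : ℕ) : Set (EuclideanSpace ℝ (Fin (k + 1))) :=
  {x | (∀ i, 0 ≤ x i) ∧ ∑ i, x i = 1}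

/-- `A` is a strong deformation retract of `X`: there is a continuous map
`H : X × [0,1] → X` with `H(x,0) = x`, `H(x,1) ∈ A`, and `H(a,t) = a` for `a ∈ A`. -/
def IsStrongDeformationRetract {E : Type*} [TopologicalSpace E] (X A : Set E) : Prop :=
  A ⊆ X ∧ ∃ H : E × ℝ → E,
    ContinuousOn H (X ×ˢ Set.Icc (0 : ℝ) 1) ∧
    (∀ x ∈ X, ∀ t ∈ Set.Icc (0 : ℝ) 1, H (x, t) ∈ X) ∧
    (∀ x ∈ X, H (x, 0) = x) ∧
    (∀ x ∈ X, H (x, 1) ∈ A) ∧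
    (∀ a ∈ A, ∀ t ∈ Set.Icc (0 : ℝ) 1, H (a, t) = a)

/-! Choose a point `q` of the affine span of `X` that lies strictly beyond exactly the facets making
up `B` and is an interior point of the convex set `D` cut out by the remaining constraints. Moving
away from `q` can only increase the coordinates vanishing on `B`, so the central projection from `q`
onto the boundary of `D` maps `X` into `X ∩ ∂D`. This intersection is the closure of `∂X \ B`: each
of its points is its own projection, hence a limit of projections of points off `B`. As `X` is
convex, the straight-line homotopy to the projection stays in `X`. -/

open Filter Set Topology AffineMap

theorem mem_intrinsicInterior_iff_mem_nhdsWithin {𝕜 V P : Type*} [Ring 𝕜] [AddCommGroup V]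
    [Module 𝕜 V] [TopologicalSpace P] [AddTorsor V P] {X : Set P} {p : P} :
    p ∈ intrinsicInterior 𝕜 X ↔
      p ∈ affineSpan 𝕜 X ∧ X ∈ 𝓝[(affineSpan 𝕜 X : Set P)] p := by
  simp only [mem_intrinsicInterior, mem_interior_iff_mem_nhds]
  constructor
  · rintro ⟨y, hy, rfl⟩
    exact ⟨y.2, preimage_coe_mem_nhds_subtype.1 hy⟩
  · rintro ⟨hp, hX⟩
    exact ⟨⟨p, hp⟩, preimage_coe_mem_nhds_subtype.2 hX, rfl⟩

theorem mem_intrinsicFrontier_iff_of_isClosed {𝕜 V P : Type*} [Ring 𝕜] [AddCommGroup V]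
    [Module 𝕜 V] [TopologicalSpace P] [AddTorsor V P] {X : Set P} (hX : IsClosed X) {p : P} :
    p ∈ intrinsicFrontier 𝕜 X ↔ p ∈ X ∧ p ∉ intrinsicInterior 𝕜 X := by
  rw [← intrinsicClosure_sdiff_intrinsicInterior,
    (hX.preimage continuous_subtype_val).intrinsicClosure, _root_.Set.mem_sdiff]

section Radial

variable {E : Type*} [AddCommGroup E] [Module ℝ E]

/-- The Minkowski gauge of `D` centred at the point `q` instead of the origin. -/
noncomputable def gaugeAt (D : Set E) (q x : E) : ℝ :=
  gauge ((q + ·) ⁻¹' D) (x - q)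

/-- The central projection from `q` onto the boundary of `D`. It is meaningful only at points of
positive gauge, that is, on the rays from `q` that leave `D`. -/
noncomputable def radialProj (D : Set E) (q x : E) : E :=
  lineMap q x (gaugeAt D q x)⁻¹

variable {D : Set E} {q x : E}

theorem gaugeAt_lineMap {s : ℝ} (hs : 0 ≤ s) :
    gaugeAt D q (lineMap q x s) = s * gaugeAt D q x := by
  rw [gaugeAt, ← vsub_eq_sub, lineMap_vsub_left, vsub_eq_sub, gauge_smul_of_nonneg hs, gaugeAt,
    smul_eq_mul]

theorem gaugeAt_radialProj (hx : 0 < gaugeAt D q x) : gaugeAt D q (radialProj D q x) = 1 := by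
  rw [radialProj, gaugeAt_lineMap (inv_nonneg.2 hx.le), inv_mul_cancel₀ hx.ne']

theorem radialProj_eq_self (hx : gaugeAt D q x = 1) : radialProj D q x = x := by
  rw [radialProj, hx, inv_one, lineMap_apply_one]

variable [TopologicalSpace E] {ι : Type*}

/-- The set cut out of `D` by the affine subspace `A` and the half-spaces `0 ≤ ℓ i`. -/
def truncation (A : AffineSubspace ℝ E) (D : Set E) (ℓ : ι → E →ᴬ[ℝ] ℝ) : Set E :=
  {x | x ∈ A ∧ x ∈ D ∧ ∀ i, 0 ≤ ℓ i x}

/-- `q` is an interior point of `D` lying outside (or on the boundary of) every half-space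
`0 ≤ ℓ i`, so that it sees precisely the walls `ℓ i = 0` of `truncation A D ℓ`; moreover every ray
from `q` through the truncation leaves `D`, so that projecting from `q` onto the boundary of `D`
makes sense there. -/
structure IsProjectionCenter (A : AffineSubspace ℝ E) (D : Set E) (ℓ : ι → E →ᴬ[ℝ] ℝ)
    (q : E) : Prop where
  mem : q ∈ A
  mem_nhds : D ∈ 𝓝 q
  apply_nonpos : ∀ i, ℓ i q ≤ 0
  exists_lineMap_notMem : ∀ x ∈ truncation A D ℓ, ∃ s : ℝ, 0 ≤ s ∧ lineMap q x s ∉ D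

variable {A : AffineSubspace ℝ E} {ℓ : ι → E →ᴬ[ℝ] ℝ}

theorem isClosed_truncation (hA : IsClosed (A : Set E)) (hDc : IsClosed D) :
    IsClosed (truncation A D ℓ) := by
  simp only [truncation, ofPred_and, ofPred_forall]
  exact hA.inter (hDc.inter
    (isClosed_iInter fun i => isClosed_le continuous_const (ℓ i).continuous))

theorem convex_truncation (hD : Convex ℝ D) : Convex ℝ (truncation A D ℓ) := by
  simp only [truncation, ofPred_and, ofPred_forall]
  exact A.convex.inter (hD.inter
    (convex_iInter fun i => (convex_Ici (0 : ℝ)).affine_preimage (ℓ i).toAffineMap))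

end Radial

theorem preimage_add_left_mem_nhds_zero {G : Type*} [AddGroup G] [TopologicalSpace G]
    [ContinuousAdd G] {D : Set G} {q : G} (hq : D ∈ 𝓝 q) : (q + ·) ⁻¹' D ∈ 𝓝 (0 : G) :=
  (continuous_const_add q).continuousAt.preimage_mem_nhds (by rwa [add_zero])

section TopologicalVectorSpace

variable {E : Type*} [AddCommGroup E] [Module ℝ E] [TopologicalSpace E] [IsTopologicalAddGroup E]
  [ContinuousSMul ℝ E]

theorem IsStrongDeformationRetract.of_convex_of_retraction {X A : Set E} {r : E → E}
    (hX : Convex ℝ X) (hAX : A ⊆ X) (hr : ContinuousOn r X) (hrA : MapsTo r X A)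
    (hfix : ∀ a ∈ A, r a = a) : IsStrongDeformationRetract X A := by
  refine ⟨hAX, fun p => lineMap p.1 (r p.1) p.2, ?_, ?_, ?_, ?_, ?_⟩
  · exact continuousOn_fst.lineMap (hr.comp continuousOn_fst fun p hp => hp.1) continuousOn_snd
  · exact fun x hx t ht => hX.lineMap_mem hx (hAX (hrA hx)) ht
  · exact fun x _ => lineMap_apply_zero _ _
  · exact fun x hx => by simpa only [lineMap_apply_one] using hrA hx
  · exact fun a ha t _ => by simp only [hfix a ha, lineMap_same_apply]

theorem exists_one_lt_lineMap_mem_of_mem_intrinsicInterior {X : Set E} {p q : E}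
    (hp : p ∈ intrinsicInterior ℝ X) (hq : q ∈ affineSpan ℝ X) :
    ∃ s : ℝ, 1 < s ∧ lineMap q p s ∈ X := by
  obtain ⟨hpX, hX⟩ := mem_intrinsicInterior_iff_mem_nhdsWithin.1 hp
  have htendsto : Tendsto (lineMap q p : ℝ → E) (𝓝 1) (𝓝[(affineSpan ℝ X : Set E)] p) := by
    refine tendsto_nhdsWithin_iff.2 ⟨?_, Eventually.of_forall fun s => lineMap_mem s hq hpX⟩
    simpa only [lineMap_apply_one] using
      (lineMap_continuous (R := ℝ) (p := q) (q := p)).tendsto 1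
  have hmem : ∀ᶠ s in 𝓝[>] (1 : ℝ), lineMap q p s ∈ X :=
    nhdsWithin_le_nhds (htendsto hX)
  exact (eventually_mem_nhdsWithin.and hmem).exists

variable {D : Set E} {q x : E}

theorem continuous_gaugeAt (hD : Convex ℝ D) (hq : D ∈ 𝓝 q) : Continuous (gaugeAt D q) :=
  (continuous_gauge (hD.translate_preimage_right q) (preimage_add_left_mem_nhds_zero hq)).comp
    (continuous_sub_right q)

theorem gaugeAt_le_one_iff (hDc : IsClosed D) (hD : Convex ℝ D) (hq : D ∈ 𝓝 q) :
    gaugeAt D q x ≤ 1 ↔ x ∈ D := by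
  rw [gaugeAt, gauge_le_one_iff_mem_closure (hD.translate_preimage_right q)
    (preimage_add_left_mem_nhds_zero hq), (hDc.preimage (continuous_const_add q)).closure_eq,
    mem_preimage, add_sub_cancel]

theorem gaugeAt_pos_of_lineMap_notMem (hDc : IsClosed D) (hD : Convex ℝ D) (hq : D ∈ 𝓝 q) {s : ℝ}
    (hs : 0 ≤ s) (hx : lineMap q x s ∉ D) : 0 < gaugeAt D q x := by
  rw [← gaugeAt_le_one_iff hDc hD hq, gaugeAt_lineMap hs, not_le] at hx
  exact pos_of_mul_pos_right (one_pos.trans hx) hs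

theorem continuousOn_radialProj {X : Set E} (hD : Convex ℝ D) (hq : D ∈ 𝓝 q)
    (hX : ∀ x ∈ X, 0 < gaugeAt D q x) : ContinuousOn (radialProj D q) X :=
  continuousOn_const.lineMap continuousOn_id
    ((continuous_gaugeAt hD hq).continuousOn.inv₀ fun x hx => (hX x hx).ne')

variable {ι : Type*} {A : AffineSubspace ℝ E} {ℓ : ι → E →ᴬ[ℝ] ℝ} {x₀ : E}

theorem mem_closure_truncation_pos (hD : Convex ℝ D) (hx₀ : x₀ ∈ truncation A D ℓ)
    (hpos : ∀ i, 0 < ℓ i x₀) (hx : x ∈ truncation A D ℓ) :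
    x ∈ closure {y | y ∈ truncation A D ℓ ∧ ∀ i, 0 < ℓ i y} := by
  have htendsto : Tendsto (lineMap x x₀ : ℝ → E) (𝓝[>] 0) (𝓝 x) := by
    simpa only [lineMap_apply_zero] using
      (lineMap_continuous (R := ℝ) (p := x) (q := x₀)).continuousWithinAt.tendsto (x := (0 : ℝ))
  refine mem_closure_of_tendsto htendsto ?_
  filter_upwards [Ioo_mem_nhdsGT (one_pos (α := ℝ))] with t ht
  refine ⟨(convex_truncation hD).lineMap_mem hx hx₀ (Ioo_subset_Icc_self ht), fun i => ?_⟩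
  rw [ContinuousAffineMap.apply_lineMap, lineMap_apply_ring]
  exact add_pos_of_nonneg_of_pos (mul_nonneg (sub_nonneg.2 ht.2.le) (hx.2.2 i))
    (mul_pos ht.1 (hpos i))

theorem mem_intrinsicInterior_truncation [Finite ι] (hDc : IsClosed D) (hD : Convex ℝ D)
    (hq : D ∈ 𝓝 q) (hx : x ∈ truncation A D ℓ) (hgauge : gaugeAt D q x < 1)
    (hpos : ∀ i, 0 < ℓ i x) : x ∈ intrinsicInterior ℝ (truncation A D ℓ) := by
  refine mem_intrinsicInterior_iff_mem_nhdsWithin.2 ⟨subset_affineSpan ℝ _ hx, ?_⟩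
  have hspan : affineSpan ℝ (truncation A D ℓ) ≤ A := affineSpan_le.2 fun y hy => hy.1
  have hgauge_near : ∀ᶠ y in 𝓝 x, gaugeAt D q y < 1 :=
    (continuous_gaugeAt hD hq).continuousAt.eventually_lt_const hgauge
  have hpos_near : ∀ᶠ y in 𝓝 x, ∀ i, 0 < ℓ i y :=
    eventually_all.2 fun i => (ℓ i).continuous.continuousAt.eventually_const_lt (hpos i)
  filter_upwards [self_mem_nhdsWithin, nhdsWithin_le_nhds hgauge_near,
    nhdsWithin_le_nhds hpos_near] with y hy hygauge hypos
  exact ⟨hspan hy, (gaugeAt_le_one_iff hDc hD hq).1 hygauge.le, fun i => (hypos i).le⟩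

namespace IsProjectionCenter

theorem mem_affineSpan [Finite ι] (hq : IsProjectionCenter A D ℓ q) (hD : Convex ℝ D)
    (hx₀ : x₀ ∈ truncation A D ℓ) (hpos : ∀ i, 0 < ℓ i x₀) :
    q ∈ affineSpan ℝ (truncation A D ℓ) := by
  have hpos_near : ∀ᶠ t in 𝓝[>] (0 : ℝ), ∀ i, 0 < ℓ i (lineMap x₀ q t) := by
    refine eventually_all.2 fun i => nhdsWithin_le_nhds ?_
    have hcont : Continuous fun t : ℝ => ℓ i (lineMap x₀ q t) :=
      (ℓ i).continuous.comp lineMap_continuous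
    exact hcont.continuousAt.eventually_const_lt (by simpa only [lineMap_apply_zero] using hpos i)
  obtain ⟨t, htpos, ht⟩ := (hpos_near.and (Ioo_mem_nhdsGT (one_pos (α := ℝ)))).exists
  have hmem : lineMap x₀ q t ∈ truncation A D ℓ :=
    ⟨lineMap_mem t hx₀.1 hq.mem,
      hD.lineMap_mem hx₀.2.1 (mem_of_mem_nhds hq.mem_nhds) (Ioo_subset_Icc_self ht),
      fun i => (htpos i).le⟩
  have hline : lineMap x₀ (lineMap x₀ q t) t⁻¹ = q := by
    rw [lineMap_lineMap_right, inv_mul_cancel₀ ht.1.ne', lineMap_apply_one]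
  exact hline ▸ lineMap_mem t⁻¹ (subset_affineSpan ℝ _ hx₀) (subset_affineSpan ℝ _ hmem)

theorem mem_intrinsicFrontier (hq : IsProjectionCenter A D ℓ q) (hA : IsClosed (A : Set E))
    (hDc : IsClosed D) (hD : Convex ℝ D) (hspan : q ∈ affineSpan ℝ (truncation A D ℓ))
    (hx : x ∈ truncation A D ℓ) (hgauge : gaugeAt D q x = 1) :
    x ∈ intrinsicFrontier ℝ (truncation A D ℓ) := by
  refine (mem_intrinsicFrontier_iff_of_isClosed (isClosed_truncation hA hDc)).2 ⟨hx, fun hint => ?_⟩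
  obtain ⟨s, hs, hmem⟩ := exists_one_lt_lineMap_mem_of_mem_intrinsicInterior hint hspan
  have hle := (gaugeAt_le_one_iff hDc hD hq.mem_nhds).2 hmem.2.1
  rw [gaugeAt_lineMap (zero_le_one.trans hs.le), hgauge, mul_one] at hle
  exact hle.not_gt hs

theorem gaugeAt_pos (hq : IsProjectionCenter A D ℓ q) (hDc : IsClosed D) (hD : Convex ℝ D)
    (hx : x ∈ truncation A D ℓ) : 0 < gaugeAt D q x :=
  let ⟨_, hs, hs_notMem⟩ := hq.exists_lineMap_notMem x hx
  gaugeAt_pos_of_lineMap_notMem hDc hD hq.mem_nhds hs hs_notMem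

theorem le_apply_radialProj (hq : IsProjectionCenter A D ℓ q) (hDc : IsClosed D)
    (hD : Convex ℝ D) (hx : x ∈ truncation A D ℓ) (i : ι) : ℓ i x ≤ ℓ i (radialProj D q x) := by
  have hscale : 1 ≤ (gaugeAt D q x)⁻¹ :=
    (one_le_inv₀ (hq.gaugeAt_pos hDc hD hx)).2
      ((gaugeAt_le_one_iff hDc hD hq.mem_nhds).2 hx.2.1)
  rw [radialProj, ContinuousAffineMap.apply_lineMap, lineMap_apply_ring]
  nlinarith [hq.apply_nonpos i, hx.2.2 i]

theorem radialProj_mem (hq : IsProjectionCenter A D ℓ q) (hDc : IsClosed D) (hD : Convex ℝ D)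
    (hx : x ∈ truncation A D ℓ) : radialProj D q x ∈ truncation A D ℓ :=
  ⟨lineMap_mem _ hq.mem hx.1,
    (gaugeAt_le_one_iff hDc hD hq.mem_nhds).1 (gaugeAt_radialProj (hq.gaugeAt_pos hDc hD hx)).le,
    fun i => (hx.2.2 i).trans (hq.le_apply_radialProj hDc hD hx i)⟩

theorem closure_intrinsicFrontier_sdiff [Finite ι] (hq : IsProjectionCenter A D ℓ q)
    (hA : IsClosed (A : Set E)) (hDc : IsClosed D) (hD : Convex ℝ D)
    (hx₀ : x₀ ∈ truncation A D ℓ) (hpos : ∀ i, 0 < ℓ i x₀) :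
    closure (intrinsicFrontier ℝ (truncation A D ℓ) \
      {x | x ∈ truncation A D ℓ ∧ ∃ i, ℓ i x = 0}) =
      {x | x ∈ truncation A D ℓ ∧ gaugeAt D q x = 1} := by
  have hXc : IsClosed (truncation A D ℓ) := isClosed_truncation hA hDc
  refine (closure_minimal ?_ (hXc.inter
    (isClosed_eq (continuous_gaugeAt hD hq.mem_nhds) continuous_const))).antisymm ?_
  · rintro x ⟨hfront, hwall⟩
    obtain ⟨hx, hnotint⟩ := (mem_intrinsicFrontier_iff_of_isClosed hXc).1 hfront
    have hx_pos : ∀ i, 0 < ℓ i x := fun i =>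
      (hx.2.2 i).lt_of_ne' fun hi => hwall ⟨hx, i, hi⟩
    refine ⟨hx, ((gaugeAt_le_one_iff hDc hD hq.mem_nhds).2 hx.2.1).eq_of_not_lt fun hlt => ?_⟩
    exact hnotint (mem_intrinsicInterior_truncation hDc hD hq.mem_nhds hx hlt hx_pos)
  · rintro x ⟨hx, hgauge⟩
    -- `x` is its own projection, hence a limit of projections of points off the walls; moving away
    -- from `q` keeps those projections off the walls.
    rw [← radialProj_eq_self hgauge]
    refine ContinuousWithinAt.mem_closure (((continuousOn_radialProj hD hq.mem_nhds fun y hy =>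
      hq.gaugeAt_pos hDc hD hy) x hx).mono (sep_subset _ _))
      (mem_closure_truncation_pos hD hx₀ hpos hx) fun y hy => ⟨?_, ?_⟩
    · exact hq.mem_intrinsicFrontier hA hDc hD (hq.mem_affineSpan hD hx₀ hpos)
        (hq.radialProj_mem hDc hD hy.1) (gaugeAt_radialProj (hq.gaugeAt_pos hDc hD hy.1))
    · rintro ⟨-, i, hi⟩
      exact ((hy.2 i).trans_le (hq.le_apply_radialProj hDc hD hy.1 i)).ne' hi

theorem isStrongDeformationRetract [Finite ι] (hq : IsProjectionCenter A D ℓ q)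
    (hA : IsClosed (A : Set E)) (hDc : IsClosed D) (hD : Convex ℝ D)
    (hx₀ : x₀ ∈ truncation A D ℓ) (hpos : ∀ i, 0 < ℓ i x₀) :
    IsStrongDeformationRetract (truncation A D ℓ)
      (closure (intrinsicFrontier ℝ (truncation A D ℓ) \
        {x | x ∈ truncation A D ℓ ∧ ∃ i, ℓ i x = 0})) := by
  rw [hq.closure_intrinsicFrontier_sdiff hA hDc hD hx₀ hpos]
  have hgauge_pos : ∀ x ∈ truncation A D ℓ, 0 < gaugeAt D q x := fun x => hq.gaugeAt_pos hDc hD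
  exact .of_convex_of_retraction (convex_truncation hD) (sep_subset _ _)
    (continuousOn_radialProj hD hq.mem_nhds hgauge_pos)
    (fun x hx => ⟨hq.radialProj_mem hDc hD hx, gaugeAt_radialProj (hgauge_pos x hx)⟩)
    fun x hx => radialProj_eq_self hx.2

end IsProjectionCenter

end TopologicalVectorSpace

section FiniteDimensional

variable {E : Type*} [NormedAddCommGroup E] [NormedSpace ℝ E]

theorem exists_continuousAffineMap_retraction (A : AffineSubspace ℝ E)
    [FiniteDimensional ℝ A.direction] (hA : (A : Set E).Nonempty) :
    ∃ ρ : E →ᴬ[ℝ] E, (∀ x, ρ x ∈ A) ∧ ∀ x ∈ A, ρ x = x := by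
  obtain ⟨c, hc⟩ := hA
  obtain ⟨π, hπ⟩ := Submodule.ClosedComplemented.of_finiteDimensional A.direction
  let L : E →L[ℝ] E := A.direction.subtypeL ∘L π
  let ρ : E →ᴬ[ℝ] E := L.toContinuousAffineMap + ContinuousAffineMap.const ℝ E (c - L c)
  have hρ : ∀ x, ρ x = π (x - c) +ᵥ c := fun x => by
    simp only [ρ, L, ContinuousLinearMap.comp_apply, Submodule.coe_subtypeL,
      Submodule.subtype_apply, ContinuousAffineMap.coe_add,
      ContinuousLinearMap.coe_toContinuousAffineMap, ContinuousAffineMap.coe_const, Pi.add_apply,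
      Function.const_apply, map_sub, Submodule.vadd_def, AddSubgroupClass.coe_sub, vadd_eq_add]
    abel
  refine ⟨ρ, fun x => ?_, fun x hx => ?_⟩
  · rw [hρ]
    exact AffineSubspace.vadd_mem_of_mem_direction (π (x - c)).2 hc
  · have hfix : π (x - c) = ⟨x - c, AffineSubspace.vsub_mem_direction hx hc⟩ := hπ ⟨x - c, _⟩
    rw [hρ, hfix, Submodule.vadd_def, vadd_eq_add, sub_add_cancel]

theorem exists_isClosed_convex_mem_nhds_inter_affineSpan [FiniteDimensional ℝ E] {P : Set E}
    (hPc : IsClosed P) (hP : Convex ℝ P) (hne : P.Nonempty) :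
    ∃ D : Set E, IsClosed D ∧ Convex ℝ D ∧ (∃ c ∈ P, D ∈ 𝓝 c) ∧
      ∀ x ∈ affineSpan ℝ P, x ∈ D ↔ x ∈ P := by
  obtain ⟨c, hc⟩ := hne.intrinsicInterior hP
  obtain ⟨hcspan, hcP⟩ := mem_intrinsicInterior_iff_mem_nhdsWithin.1 hc
  obtain ⟨ρ, hρmem, hρfix⟩ := exists_continuousAffineMap_retraction (affineSpan ℝ P) ⟨c, hcspan⟩
  have hρc : Tendsto ρ (𝓝 c) (𝓝[(affineSpan ℝ P : Set E)] c) := by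
    refine tendsto_nhdsWithin_iff.2 ⟨?_, Eventually.of_forall hρmem⟩
    simpa only [hρfix c hcspan] using ρ.continuous.tendsto c
  exact ⟨ρ ⁻¹' P, hPc.preimage ρ.continuous, hP.affine_preimage ρ.toAffineMap,
    ⟨c, intrinsicInterior_subset hc, hρc hcP⟩, fun x hx => by rw [mem_preimage, hρfix x hx]⟩

end FiniteDimensional

/-- The hyperplane of `ℝ^{k+1}` spanned by the simplex `simplexSet k`. -/
def simplexHyperplane (k : ℕ) : AffineSubspace ℝ (EuclideanSpace ℝ (Fin (k + 1))) where
  carrier := {x | ∑ i, x i = 1}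
  smul_vsub_vadd_mem' c x y z hx hy hz := by
    simp only [mem_ofPred_eq] at hx hy hz
    simp [Finset.sum_add_distrib, ← Finset.mul_sum, hx, hy, hz]

theorem mem_simplexHyperplane {k : ℕ} {x : EuclideanSpace ℝ (Fin (k + 1))} :
    x ∈ simplexHyperplane k ↔ ∑ i, x i = 1 :=
  Iff.rfl

/-- A point in the hyperplane of the simplex that lies strictly beyond the facets `x i = 0` with
`i ∈ I` and strictly inside the other facets. The value off `I` is the one that makes the
coordinates sum to `1`. -/
noncomputable def pointBeyondFacets {k : ℕ} (I : Finset (Fin (k + 1))) :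
    EuclideanSpace ℝ (Fin (k + 1)) :=
  WithLp.toLp 2 fun i => if i ∈ I then -1 else (1 + I.card) / Iᶜ.card

/-- The barycenter of the simplex `simplexSet k`. -/
noncomputable def simplexBarycenter (k : ℕ) : EuclideanSpace ℝ (Fin (k + 1)) :=
  WithLp.toLp 2 fun _ => ((k : ℝ) + 1)⁻¹

theorem simplexBarycenter_pos (k : ℕ) (i : Fin (k + 1)) : 0 < simplexBarycenter k i :=
  inv_pos.2 k.cast_add_one_pos

theorem simplexBarycenter_mem (k : ℕ) : simplexBarycenter k ∈ simplexSet k := by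
  refine ⟨fun i => (simplexBarycenter_pos k i).le, ?_⟩
  simp [simplexBarycenter, k.cast_add_one_ne_zero]

section Facets

variable {k : ℕ} {I : Finset (Fin (k + 1))}

theorem pointBeyondFacets_apply_of_mem {i : Fin (k + 1)} (hi : i ∈ I) :
    pointBeyondFacets I i = -1 :=
  if_pos hi

theorem pointBeyondFacets_apply_pos {i : Fin (k + 1)} (hi : i ∉ I) : 0 < pointBeyondFacets I i := by
  have hcard : 0 < Iᶜ.card := Finset.card_pos.2 ⟨i, Finset.mem_compl.2 hi⟩
  simp only [pointBeyondFacets, if_neg hi]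
  positivity

theorem sum_compl_pointBeyondFacets (hI' : Iᶜ.Nonempty) :
    ∑ i ∈ Iᶜ, pointBeyondFacets I i = 1 + I.card := by
  have hcard : (Iᶜ.card : ℝ) ≠ 0 := Nat.cast_ne_zero.2 hI'.card_ne_zero
  have hconst : ∀ i ∈ Iᶜ, pointBeyondFacets I i = (1 + I.card) / Iᶜ.card := fun i hi =>
    if_neg (Finset.mem_compl.1 hi)
  rw [Finset.sum_congr rfl hconst, Finset.sum_const, nsmul_eq_mul, mul_div_cancel₀ _ hcard]

theorem pointBeyondFacets_mem_simplexHyperplane (hI' : Iᶜ.Nonempty) :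
    pointBeyondFacets I ∈ simplexHyperplane k := by
  have hsum : ∑ i ∈ I, pointBeyondFacets I i = -I.card := by
    have hconst : ∀ i ∈ I, pointBeyondFacets I i = -1 := fun _ => pointBeyondFacets_apply_of_mem
    rw [Finset.sum_congr rfl hconst, Finset.sum_const, nsmul_eq_mul, mul_neg_one]
  rw [mem_simplexHyperplane, ← Finset.sum_add_sum_compl I, hsum, sum_compl_pointBeyondFacets hI']
  ring

theorem exists_lineMap_pointBeyondFacets_neg (hI : I.Nonempty) (hI' : Iᶜ.Nonempty)
    {x : EuclideanSpace ℝ (Fin (k + 1))} (hx : x ∈ simplexSet k) :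
    ∃ i ∉ I, lineMap (pointBeyondFacets I) x (3 : ℝ) i < 0 := by
  -- The coordinates off `I` sum to `1 + |I|` at the base point and to at most `1` at `x`, so at
  -- parameter `3` they sum to at most `1 - 2 * |I|`.
  have hsum_x : ∑ i ∈ Iᶜ, x i ≤ 1 :=
    (Finset.sum_le_univ_sum_of_nonneg hx.1).trans_eq hx.2
  have hcard : (1 : ℝ) ≤ I.card := mod_cast hI.card_pos
  have hcoord : ∀ i, lineMap (pointBeyondFacets I) x (3 : ℝ) i =
      3 * x i - 2 * pointBeyondFacets I i := fun _ => by
    simp only [lineMap_apply_module, PiLp.add_apply, PiLp.smul_apply, smul_eq_mul]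
    ring
  have hneg : ∑ i ∈ Iᶜ, lineMap (pointBeyondFacets I) x (3 : ℝ) i < ∑ _ ∈ Iᶜ, (0 : ℝ) := by
    simp only [hcoord, Finset.sum_sub_distrib, ← Finset.mul_sum, sum_compl_pointBeyondFacets hI',
      Finset.sum_const_zero]
    linarith
  obtain ⟨i, hi, hlt⟩ := Finset.exists_lt_of_sum_lt hneg
  exact ⟨i, Finset.mem_compl.1 hi, hlt⟩

/-- The intersection of the half-spaces `0 ≤ x i` with `i ∉ I`; it has `pointBeyondFacets I` in its
interior. -/
def nonnegOff (I : Finset (Fin (k + 1))) : Set (EuclideanSpace ℝ (Fin (k + 1))) :=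
  {x | ∀ i ∉ I, 0 ≤ x i}

theorem isClosed_nonnegOff : IsClosed (nonnegOff I) := by
  simp only [nonnegOff, ofPred_forall]
  exact isClosed_biInter fun i _ => isClosed_le continuous_const (EuclideanSpace.proj i).continuous

theorem convex_nonnegOff : Convex ℝ (nonnegOff I) := by
  simp only [nonnegOff, ofPred_forall]
  exact convex_iInter₂ fun i _ =>
    (convex_Ici (0 : ℝ)).linear_preimage (EuclideanSpace.proj (𝕜 := ℝ) i).toLinearMap

theorem nonnegOff_mem_nhds_pointBeyondFacets : nonnegOff I ∈ 𝓝 (pointBeyondFacets I) := by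
  have hpos : ∀ᶠ x in 𝓝 (pointBeyondFacets I), ∀ i, i ∉ I → 0 < x i :=
    eventually_all.2 fun i => eventually_imp_distrib_left.2 fun hi =>
      (EuclideanSpace.proj (𝕜 := ℝ) i).continuous.continuousAt.eventually_const_lt
        (pointBeyondFacets_apply_pos hi)
  exact hpos.mono fun x hx i hi => (hx i hi).le

end Facets

/-- The coordinates indexed by `I` of the second factor, as the affine functions whose zero sets are
the walls to be removed. -/
noncomputable def sndCoord (E : Type*) [NormedAddCommGroup E] [NormedSpace ℝ E] {k : ℕ}
    (I : Finset (Fin (k + 1))) (i : I) : E × EuclideanSpace ℝ (Fin (k + 1)) →ᴬ[ℝ] ℝ :=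
  (EuclideanSpace.proj (i : Fin (k + 1)) ∘L
    ContinuousLinearMap.snd ℝ E (EuclideanSpace ℝ (Fin (k + 1)))).toContinuousAffineMap

section Product

variable {E : Type*} [NormedAddCommGroup E] [NormedSpace ℝ E] {k : ℕ} {I : Finset (Fin (k + 1))}
  {P D : Set E}

theorem truncation_prod_nonnegOff (hDP : ∀ x ∈ affineSpan ℝ P, x ∈ D ↔ x ∈ P) :
    truncation ((affineSpan ℝ P).prod (simplexHyperplane k)) (D ×ˢ nonnegOff I) (sndCoord E I) =
      P ×ˢ simplexSet k := by
  ext x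
  constructor
  · rintro ⟨⟨hxP, hsum⟩, ⟨hxD, hoff⟩, hon⟩
    exact ⟨(hDP x.1 hxP).1 hxD,
      fun i => if hi : i ∈ I then hon ⟨i, hi⟩ else hoff i hi, hsum⟩
  · rintro ⟨hxP, hnonneg, hsum⟩
    have hspan := subset_affineSpan ℝ P hxP
    exact ⟨⟨hspan, hsum⟩, ⟨(hDP x.1 hspan).2 hxP, fun i _ => hnonneg i⟩, fun i => hnonneg i⟩

theorem isProjectionCenter_prod_pointBeyondFacets (hI : I.Nonempty) (hI' : Iᶜ.Nonempty)
    (hDP : ∀ x ∈ affineSpan ℝ P, x ∈ D ↔ x ∈ P) {c : E} (hc : c ∈ P) (hDc : D ∈ 𝓝 c) :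
    IsProjectionCenter ((affineSpan ℝ P).prod (simplexHyperplane k)) (D ×ˢ nonnegOff I)
      (sndCoord E I) (c, pointBeyondFacets I) where
  mem := ⟨subset_affineSpan ℝ P hc, pointBeyondFacets_mem_simplexHyperplane hI'⟩
  mem_nhds := prod_mem_nhds hDc nonnegOff_mem_nhds_pointBeyondFacets
  apply_nonpos i := (pointBeyondFacets_apply_of_mem i.2).trans_le (by norm_num)
  exists_lineMap_notMem x hx := by
    rw [truncation_prod_nonnegOff hDP] at hx
    obtain ⟨i, hi, hneg⟩ := exists_lineMap_pointBeyondFacets_neg hI hI' hx.2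
    exact ⟨3, by norm_num, fun hmem => (hmem.2 i hi).not_gt hneg⟩

end Product

theorem product_retract_general {E : Type*} [NormedAddCommGroup E] [NormedSpace ℝ E]
    [FiniteDimensional ℝ E] {P : Set E} (hPc : IsClosed P) (hP : Convex ℝ P) (hne : P.Nonempty)
    {k : ℕ} {I : Finset (Fin (k + 1))} (hI : I.Nonempty) (hI' : Iᶜ.Nonempty) :
    IsStrongDeformationRetract (P ×ˢ simplexSet k)
      (closure (intrinsicFrontier ℝ (P ×ˢ simplexSet k) \
        (P ×ˢ {x | x ∈ simplexSet k ∧ ∃ i ∈ I, x i = 0}))) := by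
  obtain ⟨D, hDc, hD, ⟨c, hc, hDnhds⟩, hDP⟩ :=
    exists_isClosed_convex_mem_nhds_inter_affineSpan hPc hP hne
  have hcenter := isProjectionCenter_prod_pointBeyondFacets hI hI' hDP hc hDnhds
  have hwalls : P ×ˢ {x | x ∈ simplexSet k ∧ ∃ i ∈ I, x i = 0} =
      {x | x ∈ P ×ˢ simplexSet k ∧ ∃ i, sndCoord E I i x = 0} := by
    ext x
    simp [sndCoord, and_assoc]
  have hbary : (c, simplexBarycenter k) ∈ P ×ˢ simplexSet k := ⟨hc, simplexBarycenter_mem k⟩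
  rw [hwalls]
  rw [← truncation_prod_nonnegOff (I := I) hDP] at hbary ⊢
  exact hcenter.isStrongDeformationRetract (AffineSubspace.closed_of_finiteDimensional _)
    (hDc.prod isClosed_nonnegOff) (hD.prod convex_nonnegOff) hbary
    fun i => simplexBarycenter_pos k i

theorem isClosed_permutahedron (n : ℕ) : IsClosed (permutahedron n) :=
  ((finite_range (permVec n)).isCompact_convexHull ℝ).isClosed

theorem convex_permutahedron (n : ℕ) : Convex ℝ (permutahedron n) :=
  convex_convexHull ℝ _

theorem permutahedron_nonempty (n : ℕ) : (permutahedron n).Nonempty :=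
  (range_nonempty _).convexHull

/-- For `n ≥ 3`, `k ≥ 2`, `m₁ + ⋯ + m_k = n − 1`, the closure of `∂X \ B` — where
`X = P_{m₁} × ⋯ × P_{m_k} × Δ^k`, `∂X` is the intrinsic frontier of `X`, and
`B = P_{m₁} × ⋯ × P_{m_k} × (F_2 ∪ ⋯ ∪ F_k)` — is a strong deformation retract of `X`. -/
theorem product_retract (n k : ℕ) (hn : 3 ≤ n) (hk : 2 ≤ k) (m : Fin k → ℕ)
    (hm : ∀ r, 1 ≤ m r) (hsum : ∑ r, m r = n - 1) :
    ∀ X : Set (((r : Fin k) → EuclideanSpace ℝ (Fin (m r))) ×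
          EuclideanSpace ℝ (Fin (k + 1))),
      X = {p | (∀ r, p.1 r ∈ permutahedron (m r)) ∧ p.2 ∈ simplexSet k} →
    ∀ B : Set (((r : Fin k) → EuclideanSpace ℝ (Fin (m r))) ×
          EuclideanSpace ℝ (Fin (k + 1))),
      B = {p | (∀ r, p.1 r ∈ permutahedron (m r)) ∧ p.2 ∈ simplexSet k ∧
            ∃ i : Fin (k + 1), 1 ≤ (i : ℕ) ∧ (i : ℕ) ≤ k - 1 ∧ p.2 i = 0} →
    IsStrongDeformationRetract X (closure (intrinsicFrontier ℝ X \ B)) := by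
  rintro X rfl B rfl
  let I : Finset (Fin (k + 1)) := {i | 1 ≤ (i : ℕ) ∧ (i : ℕ) ≤ k - 1}
  have hI : I.Nonempty :=
    ⟨⟨1, by lia⟩, (Finset.mem_filter_univ _).2 ⟨le_rfl, Nat.le_sub_one_of_lt hk⟩⟩
  have hI' : Iᶜ.Nonempty := ⟨0, by simp [I]⟩
  convert product_retract_general (isClosed_set_pi fun r _ => isClosed_permutahedron (m r))
    (convex_pi fun r _ => convex_permutahedron (m r))
    (univ_pi_nonempty_iff.2 fun r => permutahedron_nonempty (m r)) hI hI' using 4 <;>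
  (ext p; simp [I, and_assoc])
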